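/- arXiv:1801.10280 — 4 statements merged into one kernel-verified Lean document; each statement's English description precedes it below -/
import Mathlib

section
/- Let (X,d) be a metric space, Y ⊆ X, x ∈ X, and let α₀, α₁ be real numbers with 0 < α₀ < α₁. Set T := Y ∪ {x} (with the subspace topology) and B := {z ∈ X : α₀ ≤ d(x,z) ≤ α₁}. Suppose h : T → T is continuous, h(T) = (B ∩ Y) ∪ {x}, and h(w) = w for every w ∈ (B ∩ Y) ∪ {x}. Then the subsets of T given by D := {z ∈ T : d(x,z) ≤ α₁ and h(z) = x} and D' := {z ∈ T : d(x,z) < α₀ and d(x, h(z)) < α₀} are equal, x ∈ D, D ⊆ {z : d(x,z) ≤ α₁}, and D is simultaneously open and closed in the subspace T. -/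
/-!
Let `f` be the distance from `p`, or any continuous function with `f p < a`. A point with
`a ≤ f z ≤ b` is fixed by `h`, so it is not sent to `p`; and `p` is the only value of `h` at which
`f` is less than `a`. Hence the part of the fiber of `h` over `p` where `f ≤ b` is cut out by the
open conditions `f z < a` and `f (h z) < a`. It is also cut out by `f z ≤ b` and `f (h z) ≤ f p`,
which are closed conditions even where `{p}` is not closed.
-/

open Set

section Height

variable {T R : Type*} {f : T → R} {a b : R} {p : T} {h : T → T}

theorem eq_iff_lt_of_mem_insert_preimage_Ici [Preorder R] (hp : f p < a) {w : T}
    (hw : w ∈ insert p (f ⁻¹' Ici a)) : w = p ↔ f w < a :=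
  ⟨fun hwp => hwp ▸ hp, fun hwa => hw.resolve_right fun haw => haw.not_gt hwa⟩

theorem eq_iff_le_of_mem_insert_preimage_Ici [Preorder R] (hp : f p < a) {w : T}
    (hw : w ∈ insert p (f ⁻¹' Ici a)) : w = p ↔ f w ≤ f p :=
  ⟨fun hwp => hwp ▸ le_rfl, fun hwp =>
    (eq_iff_lt_of_mem_insert_preimage_Ici hp hw).2 (hwp.trans_lt hp)⟩

variable [LinearOrder R]

theorem lt_of_le_of_map_eq_of_eqOn_id (hp : f p < a) (hfix : EqOn h id (f ⁻¹' Icc a b)) {z : T}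
    (hzb : f z ≤ b) (hzp : h z = p) : f z < a := by
  by_contra! haz
  have hz : z = p := (hfix ⟨haz, hzb⟩).symm.trans hzp
  exact haz.not_gt (hz ▸ hp)

theorem setOf_le_and_map_eq_eq_setOf_lt_and_map_lt (hab : a ≤ b) (hp : f p < a)
    (hmaps : ∀ z, h z ∈ insert p (f ⁻¹' Ici a)) (hfix : EqOn h id (f ⁻¹' Icc a b)) :
    {z | f z ≤ b ∧ h z = p} = {z | f z < a ∧ f (h z) < a} := by
  ext z
  have hzp : h z = p ↔ f (h z) < a := eq_iff_lt_of_mem_insert_preimage_Ici hp (hmaps z)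
  exact ⟨fun ⟨hzb, hz⟩ => ⟨lt_of_le_of_map_eq_of_eqOn_id hp hfix hzb hz, hzp.1 hz⟩,
    fun ⟨hza, hz⟩ => ⟨hza.le.trans hab, hzp.2 hz⟩⟩

variable [TopologicalSpace T] [TopologicalSpace R]

theorem isOpen_setOf_lt_and_map_lt [ClosedIciTopology R] (hf : Continuous f) (hh : Continuous h) :
    IsOpen {z | f z < a ∧ f (h z) < a} :=
  (isOpen_Iio.preimage hf).inter (isOpen_Iio.preimage (hf.comp hh))

theorem isClosed_setOf_le_and_map_eq [ClosedIicTopology R] (hf : Continuous f) (hh : Continuous h)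
    (hp : f p < a) (hmaps : ∀ z, h z ∈ insert p (f ⁻¹' Ici a)) :
    IsClosed {z | f z ≤ b ∧ h z = p} := by
  simp only [eq_iff_le_of_mem_insert_preimage_Ici hp (hmaps _)]
  exact (isClosed_Iic.preimage hf).inter (isClosed_Iic.preimage (hf.comp hh))

theorem clopen_fiber_of_retraction_onto_annulus_general [ClosedIciTopology R] [ClosedIicTopology R]
    (hf : Continuous f) (hh : Continuous h) (hab : a ≤ b) (hp : f p < a)
    (hmaps : ∀ z, h z ∈ insert p (f ⁻¹' Ici a))
    (hfix : EqOn h id (insert p (f ⁻¹' Icc a b))) :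
    {z | f z ≤ b ∧ h z = p} = {z | f z < a ∧ f (h z) < a} ∧
    p ∈ {z | f z ≤ b ∧ h z = p} ∧
    IsClopen {z | f z ≤ b ∧ h z = p} := by
  have hD := setOf_le_and_map_eq_eq_setOf_lt_and_map_lt hab hp hmaps
    (hfix.mono (subset_insert _ _))
  exact ⟨hD, ⟨hp.le.trans hab, hfix (mem_insert _ _)⟩,
    isClosed_setOf_le_and_map_eq hf hh hp hmaps, hD ▸ isOpen_setOf_lt_and_map_lt hf hh⟩

end Height

theorem setOf_coe_mem_inter_or_eq {X : Type*} (S Y : Set X) (x : X) :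
    {z : ↥(Y ∪ {x}) | (z : X) ∈ S ∩ Y ∨ (z : X) = x} =
      insert ⟨x, mem_union_right Y (mem_singleton x)⟩ (Subtype.val ⁻¹' S) := by
  ext z
  have hz : (z : X) ∈ Y ∨ (z : X) = x := z.2
  rw [mem_ofPred_eq, mem_inter_iff, and_or_right, and_iff_left hz, or_comm, mem_insert_iff,
    Subtype.ext_iff, mem_preimage]

theorem clopen_fiber_of_retraction_onto_annulus
    {X : Type*} [MetricSpace X] (Y : Set X) (x : X) (α₀ α₁ : ℝ)
    (h0 : 0 < α₀) (h01 : α₀ < α₁)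
    (h : ↥(Y ∪ {x}) → ↥(Y ∪ {x})) (hc : Continuous h)
    (hrange : Set.range h =
      {z : ↥(Y ∪ {x}) |
        (z : X) ∈ {w : X | α₀ ≤ dist x w ∧ dist x w ≤ α₁} ∩ Y ∨ (z : X) = x})
    (hfix : ∀ z : ↥(Y ∪ {x}),
      ((z : X) ∈ {w : X | α₀ ≤ dist x w ∧ dist x w ≤ α₁} ∩ Y ∨ (z : X) = x) →
        h z = z) :
    {z : ↥(Y ∪ {x}) | dist x (z : X) ≤ α₁ ∧ ((h z : X) = x)} =
      {z : ↥(Y ∪ {x}) | dist x (z : X) < α₀ ∧ dist x ((h z : X)) < α₀} ∧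
    (⟨x, Set.mem_union_right Y (Set.mem_singleton x)⟩ : ↥(Y ∪ {x})) ∈
      {z : ↥(Y ∪ {x}) | dist x (z : X) ≤ α₁ ∧ ((h z : X) = x)} ∧
    {z : ↥(Y ∪ {x}) | dist x (z : X) ≤ α₁ ∧ ((h z : X) = x)} ⊆
      {z : ↥(Y ∪ {x}) | dist x (z : X) ≤ α₁} ∧
    IsOpen {z : ↥(Y ∪ {x}) | dist x (z : X) ≤ α₁ ∧ ((h z : X) = x)} ∧
    IsClosed {z : ↥(Y ∪ {x}) | dist x (z : X) ≤ α₁ ∧ ((h z : X) = x)} := by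
  have hA := setOf_coe_mem_inter_or_eq {w | α₀ ≤ dist x w ∧ dist x w ≤ α₁} Y x
  have hmaps := (hrange.trans hA).subset.trans (insert_subset_insert fun _ hw => hw.1)
  obtain ⟨hD, hxD, hclopen⟩ := clopen_fiber_of_retraction_onto_annulus_general
    (continuous_const.dist continuous_subtype_val) hc h01.le (by rwa [dist_self])
    (range_subset_iff.1 hmaps) (fun z hz => hfix z (hA.ge hz))
  simp only [Subtype.ext_iff] at hD hxD hclopen
  exact ⟨hD, hxD, fun _ hz => hz.1, hclopen.isOpen, hclopen.isClosed⟩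
end

section
/- Let (X,d) be a metric space, A ⊆ X a nonempty subset, ε > 0, c ∈ X \ A, t a real number with 0 < t < ε/(2+ε), and y ∈ A a point with d(c,y) ≤ (1+ε)·d_A(c) − (2+ε)·t·d_A(c). Then every x ∈ X with d(c,x) < t·d_A(c) satisfies d(x,y) ≤ (1+ε)·d_A(x), where d_A(z) := inf_{a∈A} d(z,a). -/
open scoped NNReal

theorem dist_le_coeff_mul_infDist_on_small_ball_general
    {X : Type*} [PseudoMetricSpace X] {f : X → ℝ} {K : ℝ≥0} (hf : LipschitzWith K f)
    {C r : ℝ} (hC : 0 ≤ C) {c x y : X} (hcx : dist c x ≤ r)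
    (hcy : dist c y ≤ C * (f c - K * r) - r) :
    dist x y ≤ C * f x := by
  have lower_bound : f c - K * r ≤ f x := by
    rw [sub_le_iff_le_add]
    calc
      f c ≤ f x + K * dist c x := hf.le_add_mul c x
      _ ≤ f x + K * r := by gcongr
  calc
    dist x y ≤ dist c x + dist c y := dist_triangle_left x y c
    _ ≤ r + (C * (f c - K * r) - r) := add_le_add hcx hcy
    _ = C * (f c - K * r) := add_sub_cancel _ _
    _ ≤ C * f x := mul_le_mul_of_nonneg_left lower_bound hC

theorem dist_le_coeff_mul_infDist_on_small_ball
    {X : Type*} [MetricSpace X] (A : Set X) (hA : A.Nonempty)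
    (ε : ℝ) (hε : 0 < ε) (c : X) (hc : c ∉ A)
    (t : ℝ) (ht0 : 0 < t) (ht : t < ε / (2 + ε))
    (y : X) (hy : y ∈ A)
    (hcy : dist c y ≤ (1 + ε) * Metric.infDist c A - (2 + ε) * t * Metric.infDist c A) :
    ∀ x : X, dist c x < t * Metric.infDist c A →
      dist x y ≤ (1 + ε) * Metric.infDist x A := by
  intro x hx
  -- Per unit of radius, `dist · y` grows by at most `1` and `(1 + ε) * infDist · A` drops by at
  -- most `1 + ε`, whence `2 + ε`.
  exact dist_le_coeff_mul_infDist_on_small_ball_general (Metric.lipschitz_infDist_pt A)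
    (by positivity) hx.le (hcy.trans_eq (by push_cast; ring))
end

section
/- Let K be a nonarchimedean normed field, let n ≥ 2 be a fixed integer, and let C ⊆ K. Then C satisfies Cvx_n(C) if and only if C is empty, or C = K, or there exist a ∈ K and a real number r ≥ 0 such that C = {x ∈ K : ‖x−a‖ ≤ r} or C = {x ∈ K : ‖x−a‖ < r}. -/
/-!
Subtracting `a` from a combination `∑ i, α i • w i` with `∑ i, α i = 1` turns it into
`∑ i, α i • (w i - a)`, so by the strong triangle inequality it is no farther from `a` than the
farthest `w i`; hence balls are convex.

Conversely, let `C` be convex and `a, y ∈ C`. In dimension one, every `x` with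
`‖x - a‖ ≤ ‖y - a‖` is `(1 - t) a + t y` with `t = (x - a) / (y - a)`, where `‖t‖ ≤ 1` and hence
also `‖1 - t‖ ≤ 1`, so `x ∈ C`. Thus a nonempty `C` is determined by the distances from `a` to its
points: it is everything if they are unbounded, and otherwise the ball around `a` whose radius is
their supremum, closed or open according to whether the supremum is attained.
-/

open AffineMap Metric Set

/-- The convexity condition of ultrametric geometry, `Cvx_n(C)` for `ι = Fin n`: the set `C` is
closed under combinations, indexed by `ι`, with coefficients of norm at most one and sum one. -/
def UltrametricConvex (𝕜 ι : Type*) {E : Type*} [SeminormedRing 𝕜] [Fintype ι]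
    [AddCommMonoid E] [SMul 𝕜 E] (C : Set E) : Prop :=
  ∀ (w : ι → E) (α : ι → 𝕜), (∀ i, w i ∈ C) → (∀ i, ‖α i‖ ≤ 1) → ∑ i, α i = 1 →
    ∑ i, α i • w i ∈ C

lemma sum_smul_sub_of_sum_eq_one {R ι M : Type*} [Ring R] [Fintype ι] [AddCommGroup M]
    [Module R M] {α : ι → R} (hα : ∑ i, α i = 1) (w : ι → M) (a : M) :
    ∑ i, α i • w i - a = ∑ i, α i • (w i - a) := by
  simp only [smul_sub, Finset.sum_sub_distrib, ← Finset.sum_smul, hα, one_smul]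

section Balls

variable {𝕜 ι E : Type*} [SeminormedRing 𝕜] [Fintype ι] [Nonempty ι] [SeminormedAddCommGroup E]
  [IsUltrametricDist E] [Module 𝕜 E] [IsBoundedSMul 𝕜 E]

lemma exists_dist_sum_smul_le {α : ι → 𝕜} (hα : ∀ i, ‖α i‖ ≤ 1) (hsum : ∑ i, α i = 1)
    (w : ι → E) (a : E) : ∃ i, dist (∑ i, α i • w i) a ≤ dist (w i) a := by
  obtain ⟨i, -, hi⟩ := IsUltrametricDist.exists_norm_finsetSum_le_of_nonempty
    Finset.univ_nonempty fun i ↦ α i • (w i - a)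
  refine ⟨i, ?_⟩
  calc
    dist (∑ i, α i • w i) a = ‖∑ i, α i • (w i - a)‖ := by
      rw [dist_eq_norm, sum_smul_sub_of_sum_eq_one hsum]
    _ ≤ ‖α i • (w i - a)‖ := hi
    _ ≤ ‖α i‖ * ‖w i - a‖ := norm_smul_le _ _
    _ ≤ ‖w i - a‖ := mul_le_of_le_one_left (norm_nonneg _) (hα i)
    _ = dist (w i) a := (dist_eq_norm _ _).symm

variable (𝕜 ι)

lemma ultrametricConvex_closedBall (a : E) (r : ℝ) : UltrametricConvex 𝕜 ι (closedBall a r) := by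
  intro w α hw hα hsum
  obtain ⟨i, hi⟩ := exists_dist_sum_smul_le hα hsum w a
  exact hi.trans (hw i)

lemma ultrametricConvex_ball (a : E) (r : ℝ) : UltrametricConvex 𝕜 ι (ball a r) := by
  intro w α hw hα hsum
  obtain ⟨i, hi⟩ := exists_dist_sum_smul_le hα hsum w a
  exact hi.trans_lt (hw i)

end Balls

lemma UltrametricConvex.lineMap_mem {𝕜 ι E : Type*} [SeminormedRing 𝕜] [NormOneClass 𝕜]
    [IsUltrametricDist 𝕜] [Fintype ι] [Nontrivial ι] [AddCommGroup E] [Module 𝕜 E] {C : Set E}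
    (hC : UltrametricConvex 𝕜 ι C) {a y : E} (ha : a ∈ C) (hy : y ∈ C) {t : 𝕜} (ht : ‖t‖ ≤ 1) :
    lineMap a y t ∈ C := by
  classical
  obtain ⟨i, j, hij⟩ := exists_pair_ne ι
  let w : ι → E := Function.update (fun _ ↦ a) j y
  let α : ι → 𝕜 := Pi.single i (1 - t) + Pi.single j t
  have hw : ∀ k, w k ∈ C := fun k ↦ by
    by_cases hk : k = j <;> simp [w, hk, ha, hy]
  have hα : ∀ k, ‖α k‖ ≤ 1 := fun k ↦ by
    have ht' : ‖1 - t‖ ≤ 1 := by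
      simpa [sub_eq_add_neg, ht] using IsUltrametricDist.norm_add_le_max 1 (-t)
    rcases eq_or_ne k i with rfl | hki
    · simpa [α, hij] using ht'
    · rcases eq_or_ne k j with rfl | hkj
      · simpa [α, hki] using ht
      · simp [α, hki, hkj]
  have hsum : ∑ k, α k = 1 := by simp [α, Finset.sum_add_distrib]
  have hcomb : ∑ k, α k • w k = lineMap a y t := by
    have hwa : ∀ k, w k - a = Pi.single (M := fun _ ↦ E) j (y - a) k := fun k ↦ by
      rcases eq_or_ne k j with rfl | hk
      · simp [w]
      · simp [w, hk]
    rw [lineMap_apply_module', ← sub_eq_iff_eq_add, sum_smul_sub_of_sum_eq_one hsum]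
    simp [hwa, Pi.single_apply, α, hij.symm]
  exact hcomb ▸ hC w α hw hα hsum

lemma exists_lineMap_eq_of_dist_le {K : Type*} [NormedDivisionRing K] {a x y : K}
    (h : dist x a ≤ dist y a) : ∃ t : K, ‖t‖ ≤ 1 ∧ lineMap a y t = x := by
  rw [dist_eq_norm, dist_eq_norm] at h
  have hxa : y - a = 0 → x - a = 0 := fun hya ↦ by simpa [hya] using h
  refine ⟨(x - a) / (y - a), ?_, ?_⟩
  · rw [norm_div]
    exact div_le_one_of_le₀ h (norm_nonneg _)
  · rw [lineMap_apply_ring', div_mul_cancel_of_imp hxa, sub_add_cancel]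

lemma UltrametricConvex.closedBall_dist_subset {K ι : Type*} [NormedDivisionRing K]
    [IsUltrametricDist K] [Fintype ι] [Nontrivial ι] {C : Set K} (hC : UltrametricConvex K ι C)
    {a y : K} (ha : a ∈ C) (hy : y ∈ C) : closedBall a (dist y a) ⊆ C := by
  intro x hx
  obtain ⟨t, ht, rfl⟩ := exists_lineMap_eq_of_dist_le hx
  exact hC.lineMap_mem ha hy ht

lemma eq_univ_or_eq_closedBall_or_eq_ball {X : Type*} [PseudoMetricSpace X] {C : Set X} {a : X}
    (hne : C.Nonempty) (hC : ∀ y ∈ C, closedBall a (dist y a) ⊆ C) :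
    C = univ ∨ ∃ r, 0 ≤ r ∧ (C = closedBall a r ∨ C = ball a r) := by
  by_cases hb : BddAbove ((dist · a) '' C)
  · obtain ⟨r, hr⟩ := Real.exists_isLUB (hne.image _) hb
    have hle : C ⊆ closedBall a r := fun y hy ↦ hr.1 (mem_image_of_mem _ hy)
    refine Or.inr ⟨r, dist_nonneg.trans (hle hne.some_mem), ?_⟩
    by_cases hattained : ∃ y ∈ C, dist y a = r
    · obtain ⟨y, hy, rfl⟩ := hattained
      exact Or.inl (hle.antisymm (hC y hy))
    · refine Or.inr (Subset.antisymm (fun y hy ↦ ?_) fun x hx ↦ ?_)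
      · exact (hle hy).lt_of_ne fun h ↦ hattained ⟨y, hy, h⟩
      · obtain ⟨_, ⟨y, hy, rfl⟩, hxy⟩ := (lt_isLUB_iff hr).1 hx
        exact hC y hy hxy.le
  · refine Or.inl (eq_univ_of_forall fun x ↦ ?_)
    obtain ⟨_, ⟨y, hy, rfl⟩, hxy⟩ := not_bddAbove_iff.1 hb (dist x a)
    exact hC y hy hxy.le

theorem ultrametrically_convex_iff_ball_general {K ι : Type*} [NormedDivisionRing K]
    [IsUltrametricDist K] [Fintype ι] [Nontrivial ι] (C : Set K) :
    UltrametricConvex K ι C ↔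
      C = ∅ ∨ C = univ ∨ ∃ (a : K) (r : ℝ), 0 ≤ r ∧ (C = closedBall a r ∨ C = ball a r) := by
  constructor
  · intro hC
    refine C.eq_empty_or_nonempty.imp_right fun ⟨a, ha⟩ ↦ ?_
    exact (eq_univ_or_eq_closedBall_or_eq_ball ⟨a, ha⟩ fun y hy ↦
      hC.closedBall_dist_subset ha hy).imp_right fun h ↦ ⟨a, h⟩
  · rintro (rfl | rfl | ⟨a, r, -, rfl | rfl⟩)
    · exact fun w _ hw ↦ (hw (Classical.arbitrary ι)).elim
    · exact fun _ _ _ _ _ ↦ mem_univ _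
    · exact ultrametricConvex_closedBall K ι a r
    · exact ultrametricConvex_ball K ι a r

theorem ultrametrically_convex_iff_ball
    {K : Type*} [NormedField K]
    (hna : ∀ a b : K, ‖a + b‖ ≤ max ‖a‖ ‖b‖)
    (n : ℕ) (hn : 2 ≤ n) (C : Set K) :
    (∀ w α : Fin n → K, (∀ i, w i ∈ C) → (∀ i, ‖α i‖ ≤ 1) → (∑ i, α i) = 1 →
        (∑ i, α i * w i) ∈ C) ↔
      C = ∅ ∨ C = Set.univ ∨
        ∃ (a : K) (r : ℝ), 0 ≤ r ∧
          (C = {x : K | ‖x - a‖ ≤ r} ∨ C = {x : K | ‖x - a‖ < r}) := by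
  have := IsUltrametricDist.isUltrametricDist_of_forall_norm_add_le_max_norm hna
  have := Fin.nontrivial_iff_two_le.2 hn
  simpa only [UltrametricConvex, smul_eq_mul, closedBall, ball, dist_eq_norm] using
    ultrametrically_convex_iff_ball_general (ι := Fin n) C
end

section
/- Let (X,d) be a metric space and (U_i)_{i∈ℕ} a sequence of open subsets of X, and set Y := ⋃_{i∈ℕ} U_i. Then there exist open sets V_i ⊆ X and sets A_i ⊆ X that are closed in the subspace Y, such that V_i ⊆ A_i ⊆ U_i for every i, ⋃_{i∈ℕ} V_i = Y, and the family (A_i)_{i∈ℕ} is locally finite in Y, i.e., every point of Y has a neighborhood meeting A_i for only finitely many i. -/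
/-!
A paracompact normal space has, for every open cover, a locally finite shrinking by closed sets
whose interiors still cover: refine the cover to a locally finite one with the same index set, then
apply the shrinking lemma. This is applied not to `X` but to `Y = ⋃ i, U i`, which is paracompact
and normal because it is metrizable. The resulting sets are pushed forward to `X`: since `Y` is open
in `X`, open sets stay open, and local finiteness survives at the points of `Y`.
-/

open Set Topology

section

variable {ι X Z : Type*} [TopologicalSpace X] [TopologicalSpace Z]

theorem exists_iUnion_eq_univ_locallyFinite_closure_subset [ParacompactSpace X] [NormalSpace X]
    {u : ι → Set X} (uo : ∀ i, IsOpen (u i)) (uc : ⋃ i, u i = univ) :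
    ∃ v : ι → Set X, (∀ i, IsOpen (v i)) ∧ ⋃ i, v i = univ ∧
      LocallyFinite (fun i => closure (v i)) ∧ ∀ i, closure (v i) ⊆ u i := by
  obtain ⟨w, wo, wc, wf, wu⟩ := precise_refinement u uo uc
  obtain ⟨v, vc, vo, vw⟩ := exists_iUnion_eq_closure_subset wo wf.point_finite wc
  exact ⟨v, vo, vc, wf.subset vw, fun i => (vw i).trans (wu i)⟩

theorem exists_isClosed_image_eq_inter_range {f : X → Z} (hf : IsInducing f) {s : Set X}
    (hs : IsClosed s) : ∃ F : Set Z, IsClosed F ∧ f '' s = F ∩ range f := by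
  obtain ⟨F, hF, rfl⟩ := hf.isClosed_iff.1 hs
  exact ⟨F, hF, image_preimage_eq_inter_range⟩

theorem exists_isOpen_finite_image_inter_nonempty {f : X → Z} (hf : IsOpenMap f)
    (hinj : Function.Injective f) {A : ι → Set X} (hA : LocallyFinite A) (x : X) :
    ∃ N : Set Z, IsOpen N ∧ f x ∈ N ∧ {i | (f '' A i ∩ N).Nonempty}.Finite := by
  obtain ⟨t, ht, hfin⟩ := hA x
  obtain ⟨s, hst, hs, hxs⟩ := mem_nhds_iff.1 ht
  refine ⟨f '' s, hf s hs, mem_image_of_mem f hxs, hfin.subset ?_⟩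
  intro i (hi : (f '' A i ∩ f '' s).Nonempty)
  rw [← image_inter hinj, image_nonempty] at hi
  exact hi.mono (inter_subset_inter_right _ hst)

theorem countable_paracompactness_interpolation_general (U : ι → Set X) (hU : ∀ i, IsOpen (U i))
    [ParacompactSpace (⋃ i, U i)] [NormalSpace (⋃ i, U i)] :
    ∃ V A : ι → Set X,
      (∀ i, IsOpen (V i)) ∧
      (∀ i, ∃ F : Set X, IsClosed F ∧ A i = F ∩ ⋃ j, U j) ∧
      (∀ i, V i ⊆ A i) ∧ (∀ i, A i ⊆ U i) ∧
      (⋃ i, V i) = (⋃ i, U i) ∧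
      (∀ x ∈ ⋃ i, U i, ∃ N : Set X, IsOpen N ∧ x ∈ N ∧
        {i : ι | (A i ∩ N).Nonempty}.Finite) := by
  have val_open : IsOpenMap ((↑) : (⋃ i, U i) → X) := (isOpen_iUnion hU).isOpenMap_subtype_val
  obtain ⟨v, vo, vc, vf, vU⟩ := exists_iUnion_eq_univ_locallyFinite_closure_subset
    (u := fun i => ((↑) : (⋃ i, U i) → X) ⁻¹' U i)
    (fun i => (hU i).preimage continuous_subtype_val)
    (by rw [← preimage_iUnion, Subtype.coe_preimage_self])
  refine ⟨fun i => (↑) '' v i, fun i => (↑) '' closure (v i), fun i => val_open _ (vo i),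
    fun i => ?_, fun i => image_mono subset_closure, fun i => image_subset_iff.2 (vU i), ?_,
    fun x hx => exists_isOpen_finite_image_inter_nonempty val_open Subtype.val_injective vf ⟨x, hx⟩⟩
  · simpa only [Subtype.range_coe] using
      exists_isClosed_image_eq_inter_range IsInducing.subtypeVal (isClosed_closure (s := v i))
  · rw [← image_iUnion, vc, image_univ, Subtype.range_coe]

end

theorem countable_paracompactness_interpolation
    {X : Type*} [MetricSpace X] (U : ℕ → Set X) (hU : ∀ i, IsOpen (U i)) :
    ∃ V A : ℕ → Set X,
      (∀ i, IsOpen (V i)) ∧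
      (∀ i, ∃ F : Set X, IsClosed F ∧ A i = F ∩ ⋃ j, U j) ∧
      (∀ i, V i ⊆ A i) ∧ (∀ i, A i ⊆ U i) ∧
      (⋃ i, V i) = (⋃ i, U i) ∧
      (∀ x ∈ ⋃ i, U i, ∃ N : Set X, IsOpen N ∧ x ∈ N ∧
        {i : ℕ | (A i ∩ N).Nonempty}.Finite) :=
  countable_paracompactness_interpolation_general U hU
end
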